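/- If a is a 4×4 orthogonal matrix with determinant 1 (a ∈ SO(4,K)), then its second compound matrix m₂(a) is a 6×6 orthogonal matrix with determinant 1 (m₂(a) ∈ SO(6,K)). -/

import Mathlib

open Matrix

def pr : Fin 6 → Fin 4 × Fin 4
  | 0 => (0, 1)
  | 1 => (0, 2)
  | 2 => (0, 3)
  | 3 => (1, 2)
  | 4 => (1, 3)
  | 5 => (2, 3)

/-- The 2×2 minor of `a` on rows `r.1 < r.2` and columns `c.1 < c.2`. -/
def minor2 {K : Type*} [CommRing K] (a : Matrix (Fin 4) (Fin 4) K)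
    (r c : Fin 4 × Fin 4) : K :=
  (a.submatrix ![r.1, r.2] ![c.1, c.2]).det

/-- The second compound matrix of a 4×4 matrix: the 6×6 matrix of 2×2 minors,
rows and columns indexed by the 2-element index pairs in lexicographic order. -/
def m2 {K : Type*} [CommRing K] (a : Matrix (Fin 4) (Fin 4) K) :
    Matrix (Fin 6) (Fin 6) K :=
  fun i j => minor2 a (pr i) (pr j)

/-!
By the Cauchy–Binet formula the second compound is multiplicative; since it also commutes with
transposition and fixes the identity, it preserves orthogonality. The determinant of the second
compound of an `n × n` matrix `A` is `det A ^ (n - 1)`: for triangular `A` the second compound is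
triangular too, in the lexicographic order, and over a field triangular matrices generate all
matrices because transvections and diagonal matrices do.
-/

open Finset

/-- The two-element subsets of a linear order, each encoded as an increasing pair; these index the
rows and columns of a second compound matrix. -/
abbrev IncreasingPair (n : Type*) [LT n] := {p : n × n // p.1 < p.2}

/-- The second compound of a matrix: the matrix of its 2×2 minors, whose rows and columns are
indexed by increasing pairs. -/
def secondCompound {R m n : Type*} [CommRing R] [LT m] [LT n] (A : Matrix m n R) :
    Matrix (IncreasingPair m) (IncreasingPair n) R :=
  fun p q => (A.submatrix ![p.1.1, p.1.2] ![q.1.1, q.1.2]).det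

section IncreasingPair

variable {n M : Type*} [Fintype n] [LinearOrder n] [CommMonoid M]

@[to_additive]
lemma prod_increasingPair_mul_swap (f : n → n → M) :
    ∏ p : IncreasingPair n, f p.1.1 p.1.2 * f p.1.2 p.1.1 = ∏ i, ∏ j ∈ {i}ᶜ, f i j := by
  have prod_subtype_lt (g : n × n → M) :
      ∏ p : IncreasingPair n, g p.1 = ∏ i, ∏ j, if i < j then g (i, j) else 1 := by
    rw [← Fintype.prod_prod_type' fun i j => if i < j then g (i, j) else 1, ← prod_filter]
    exact (prod_subtype _ (fun _ => mem_filter_univ _) g).symm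
  have lt_part := prod_subtype_lt fun p => f p.1 p.2
  have gt_part : ∏ p : IncreasingPair n, f p.1.2 p.1.1 =
      ∏ i, ∏ j, if j < i then f i j else 1 :=
    (prod_subtype_lt fun p => f p.2 p.1).trans prod_comm
  have compl_eq (i : n) : ({i}ᶜ : Finset n) = univ.filter (i < ·) ∪ univ.filter (· < i) := by
    ext j
    simp only [mem_compl, mem_singleton, mem_union, mem_filter_univ, lt_or_lt_iff_ne, ne_comm]
  rw [prod_mul_distrib, lt_part, gt_part, ← prod_mul_distrib]
  refine prod_congr rfl fun i _ => ?_
  rw [compl_eq, prod_union (disjoint_filter.2 fun j _ => lt_asymm), prod_filter, prod_filter]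

lemma prod_increasingPair_mul (d : n → M) :
    ∏ p : IncreasingPair n, d p.1.1 * d p.1.2 = (∏ i, d i) ^ (Fintype.card n - 1) := by
  rw [prod_increasingPair_mul_swap fun i _ => d i, ← prod_pow]
  simp only [prod_const, card_compl, card_singleton]

end IncreasingPair

section CauchyBinet

variable {R n : Type*} [CommRing R] [Fintype n]

lemma det_mul_fin_two (A : Matrix (Fin 2) n R) (B : Matrix n (Fin 2) R) :
    (A * B).det = ∑ k, ∑ l, A 0 k * A 1 l * (B.submatrix ![k, l] id).det := by
  simp only [det_fin_two, mul_apply, sum_mul_sum, ← sum_sub_distrib]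
  refine sum_congr rfl fun k _ => sum_congr rfl fun l _ => ?_
  simp only [submatrix_apply, cons_val_zero, cons_val_one, id_eq]
  ring

variable [LinearOrder n]

-- The terms with `k = l` vanish and those for `(k, l)` and `(l, k)` differ by a sign.
lemma det_mul_fin_two_eq_sum_increasingPair (A : Matrix (Fin 2) n R) (B : Matrix n (Fin 2) R) :
    (A * B).det = ∑ p : IncreasingPair n,
      (A.submatrix id ![p.1.1, p.1.2]).det * (B.submatrix ![p.1.1, p.1.2] id).det := by
  set g : n → n → R := fun k l => A 0 k * A 1 l * (B.submatrix ![k, l] id).det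
  have g_self (k : n) : g k k = 0 :=
    mul_eq_zero_of_right _ (det_zero_of_row_eq zero_ne_one rfl)
  calc (A * B).det = ∑ k, ∑ l, g k l := det_mul_fin_two A B
    _ = ∑ k, ∑ l ∈ {k}ᶜ, g k l := by
      refine sum_congr rfl fun k _ => ?_
      rw [Fintype.sum_eq_add_sum_compl k, g_self, zero_add]
    _ = ∑ p : IncreasingPair n, (g p.1.1 p.1.2 + g p.1.2 p.1.1) :=
      (sum_increasingPair_add_swap g).symm
    _ = _ := by
      refine sum_congr rfl fun p _ => ?_
      simp only [g, det_fin_two, submatrix_apply, cons_val_zero, cons_val_one, id_eq]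
      ring

end CauchyBinet

section Functoriality

variable {R S l m n : Type*} [CommRing R] [CommRing S]

lemma secondCompound_apply [LT m] [LT n] (A : Matrix m n R)
    (p : IncreasingPair m) (q : IncreasingPair n) :
    secondCompound A p q = A p.1.1 q.1.1 * A p.1.2 q.1.2 - A p.1.1 q.1.2 * A p.1.2 q.1.1 :=
  det_fin_two _

lemma secondCompound_transpose [LT m] [LT n] (A : Matrix m n R) :
    secondCompound Aᵀ = (secondCompound A)ᵀ := by
  ext p q
  exact det_transpose (A.submatrix _ _)

lemma secondCompound_map [LT m] [LT n] (f : R →+* S) (A : Matrix m n R) :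
    secondCompound (A.map f) = (secondCompound A).map f := by
  ext p q
  simp only [secondCompound_apply, map_apply, map_sub, map_mul]

lemma secondCompound_one [LinearOrder n] :
    secondCompound (1 : Matrix n n R) = 1 := by
  ext p q
  have not_swap : ¬ (p.1.1 = q.1.2 ∧ p.1.2 = q.1.1) := fun ⟨h₁, h₂⟩ =>
    lt_asymm p.2 (h₁ ▸ h₂ ▸ q.2)
  simp only [secondCompound_apply, one_apply, ite_zero_mul_ite_zero, mul_one, if_neg not_swap,
    sub_zero, Subtype.ext_iff, Prod.ext_iff]

lemma secondCompound_mul [LT l] [Fintype m] [LinearOrder m] [LT n]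
    (A : Matrix l m R) (B : Matrix m n R) :
    secondCompound (A * B) = secondCompound A * secondCompound B := by
  ext p q
  exact det_mul_fin_two_eq_sum_increasingPair (A.submatrix ![p.1.1, p.1.2] id)
    (B.submatrix id ![q.1.1, q.1.2])

lemma secondCompound_transpose_mul_self [Fintype m] [LinearOrder m] [LinearOrder n]
    {A : Matrix m n R} (hA : Aᵀ * A = 1) : (secondCompound A)ᵀ * secondCompound A = 1 := by
  rw [← secondCompound_transpose, ← secondCompound_mul, hA, secondCompound_one]

end Functoriality

section Determinant

variable {R K n : Type*} [CommRing R] [Field K] [LinearOrder n]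

lemma blockTriangular_secondCompound {A : Matrix n n R} (hA : A.IsUpperTriangular) :
    (secondCompound A).BlockTriangular fun p => toLex p.1 := by
  intro p q hqp
  rw [secondCompound_apply]
  rcases Prod.Lex.toLex_lt_toLex.1 hqp with h | ⟨h₁, h₂⟩
  · rw [hA h, hA (h.trans p.2), zero_mul, mul_zero, sub_zero]
  · rw [hA h₂, hA (h₁.trans_lt p.2), mul_zero, mul_zero, sub_zero]

variable [Fintype n]

lemma det_secondCompound_of_isUpperTriangular {A : Matrix n n R} (hA : A.IsUpperTriangular) :
    (secondCompound A).det = A.det ^ (Fintype.card n - 1) := by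
  let _ : LinearOrder (IncreasingPair n) :=
    LinearOrder.lift' (fun p => toLex p.1) (toLex.injective.comp Subtype.val_injective)
  have diag_entry (p : IncreasingPair n) :
      secondCompound A p p = A p.1.1 p.1.1 * A p.1.2 p.1.2 := by
    rw [secondCompound_apply, hA p.2, mul_zero, sub_zero]
  rw [det_of_isUpperTriangular (M := secondCompound A) (blockTriangular_secondCompound hA),
    det_of_isUpperTriangular hA, ← prod_increasingPair_mul]
  exact prod_congr rfl fun p _ => diag_entry p

lemma det_secondCompound_transvection {i j : n} (hij : i ≠ j) (c : R) :
    (secondCompound (transvection i j c)).det =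
      (transvection i j c).det ^ (Fintype.card n - 1) := by
  rcases hij.lt_or_gt with h | h
  · exact det_secondCompound_of_isUpperTriangular (blockTriangular_transvection h.le c)
  · rw [← det_transpose, ← det_transpose (transvection i j c), ← secondCompound_transpose]
    exact det_secondCompound_of_isUpperTriangular
      (blockTriangular_transvection' h.le c).transpose

lemma det_secondCompound_of_field (A : Matrix n n K) :
    (secondCompound A).det = A.det ^ (Fintype.card n - 1) := by
  induction A using diagonal_transvection_induction with
  | hdiag d _ => exact det_secondCompound_of_isUpperTriangular (blockTriangular_diagonal d)
  | htransvec t => exact det_secondCompound_transvection t.hij t.c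
  | hmul A B hA hB => rw [secondCompound_mul, det_mul, det_mul, hA, hB, mul_pow]

-- Both sides are integer polynomials in the entries, so it is enough to compare them on the
-- generic matrix, whose entries lie in a field.
theorem det_secondCompound (A : Matrix n n R) :
    (secondCompound A).det = A.det ^ (Fintype.card n - 1) := by
  let X := mvPolynomialX n n ℤ
  have generic : (secondCompound X).det = X.det ^ (Fintype.card n - 1) := by
    let ι := algebraMap (MvPolynomial (n × n) ℤ) (FractionRing (MvPolynomial (n × n) ℤ))
    apply IsFractionRing.injective _ (FractionRing (MvPolynomial (n × n) ℤ))
    change ι _ = ι _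
    rw [map_pow, ι.map_det, ι.map_det, RingHom.mapMatrix_apply, RingHom.mapMatrix_apply,
      ← secondCompound_map, det_secondCompound_of_field]
  let ev := MvPolynomial.eval₂Hom (Int.castRingHom R) fun p : n × n => A p.1 p.2
  have ev_X : X.map ev = A := mvPolynomialX_map_eval₂ _ A
  have specialized := congrArg ev generic
  rwa [map_pow, ev.map_det, ev.map_det, RingHom.mapMatrix_apply, RingHom.mapMatrix_apply,
    ← secondCompound_map, ev_X] at specialized

end Determinant

/-- The lexicographic enumeration `pr` as a bijection, used to reindex second compounds to `m2`. -/
noncomputable def prEquiv : Fin 6 ≃ IncreasingPair (Fin 4) :=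
  Equiv.ofBijective (fun i => ⟨pr i, by revert i; decide⟩) (by decide)

lemma m2_eq_submatrix_secondCompound {R : Type*} [CommRing R] (a : Matrix (Fin 4) (Fin 4) R) :
    m2 a = (secondCompound a).submatrix prEquiv prEquiv :=
  rfl

theorem m2_mem_SO_general {R : Type*} [CommRing R] (a : Matrix (Fin 4) (Fin 4) R)
    (horth : aᵀ * a = 1) (hdet : a.det = 1) :
    (m2 a)ᵀ * m2 a = 1 ∧ (m2 a).det = 1 := by
  rw [m2_eq_submatrix_secondCompound]
  constructor
  · rw [transpose_submatrix, submatrix_mul_equiv, secondCompound_transpose_mul_self horth,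
      submatrix_one_equiv]
  · rw [det_submatrix_equiv_self, det_secondCompound, hdet, one_pow]

/-- If a ∈ SO(4,K) then m₂(a) ∈ SO(6,K). -/
theorem m2_mem_SO {K : Type*} [Field K] (a : Matrix (Fin 4) (Fin 4) K)
    (horth : aᵀ * a = 1) (hdet : a.det = 1) :
    (m2 a)ᵀ * m2 a = 1 ∧ (m2 a).det = 1 :=
  m2_mem_SO_general a horth hdet
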